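/- Let Ω′ ⊆ ℝ² be open and let v : Ω′ → ℝ be a positive C² function of (y,τ) satisfying the renormalized translator equation on Ω′. Let U ⊆ {(v,τ) ∈ ℝ² : v > 0} be open and let Y : U → ℝ be C², and suppose Y is a two-sided inverse of v in the first variable: for every (y,τ) ∈ Ω′ one has (v(y,τ),τ) ∈ U and Y(v(y,τ),τ) = y, and for every (u,τ) ∈ U one has (Y(u,τ),τ) ∈ Ω′ and v(Y(u,τ),τ) = u. Then Y satisfies the inverse-profile translator equation Y_τ = Y_vv/(1 + Y_v²) + Y_v/v + (Y − v·Y_v)/2 + e^τ·M[Y] at every point of U. -/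

import Mathlib

noncomputable section

/-- Partial derivative in the first variable. -/
def pdv (f : ℝ × ℝ → ℝ) (p : ℝ × ℝ) : ℝ := deriv (fun s => f (s, p.2)) p.1

/-- Partial derivative in the second variable. -/
def pdτ (f : ℝ × ℝ → ℝ) (p : ℝ × ℝ) : ℝ := deriv (fun s => f (p.1, s)) p.2

/-- The nonlinear term `N[v]` in the renormalized translator equation. -/
def Nop (v : ℝ × ℝ → ℝ) (p : ℝ × ℝ) : ℝ :=
  (pdv v p * (pdτ v p - v p / 2) - p.1 / 2) ^ 2 * pdv (pdv v) p /
      ((1 + (pdv v p) ^ 2) *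
        (1 + (pdv v p) ^ 2 + Real.exp p.2 * (pdτ v p + p.1 / 2 * pdv v p - v p / 2) ^ 2))
    + ((1 + (pdv v p) ^ 2) * pdτ (pdτ v) p
        - 2 * (pdv v p * (pdτ v p - v p / 2) - p.1 / 2) * pdτ (pdv v) p
        + 1 / 4 * (1 + (pdv v p) ^ 2) * (p.1 * pdv v p - v p)) /
      (1 + (pdv v p) ^ 2 + Real.exp p.2 * (pdτ v p + p.1 / 2 * pdv v p - v p / 2) ^ 2)

/-- The renormalized translator equation
`v_τ = v_yy/(1+v_y²) − (y/2)v_y + v/2 − 1/v + e^τ N[v]`. -/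
def RenormEq (v : ℝ × ℝ → ℝ) (p : ℝ × ℝ) : Prop :=
  pdτ v p = pdv (pdv v) p / (1 + (pdv v p) ^ 2) - p.1 / 2 * pdv v p + v p / 2 - 1 / v p
    + Real.exp p.2 * Nop v p

/-- The nonlinear term `M[Y]` in the inverse-profile translator equation. -/
def Mop (Y : ℝ × ℝ → ℝ) (p : ℝ × ℝ) : ℝ :=
  ((Y p / 2 - pdτ Y p) * pdv Y p + p.1 / 2) ^ 2 * pdv (pdv Y) p /
      ((1 + (pdv Y p) ^ 2) *
        (1 + (pdv Y p) ^ 2 + Real.exp p.2 * (Y p / 2 - pdτ Y p - p.1 / 2 * pdv Y p) ^ 2))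
    + ((1 + (pdv Y p) ^ 2) * pdτ (pdτ Y) p
        + (p.1 + Y p * pdv Y p - 2 * pdv Y p * pdτ Y p) * pdτ (pdv Y) p
        + 1 / 4 * (1 + (pdv Y p) ^ 2) * (p.1 * pdv Y p - Y p)) /
      (1 + (pdv Y p) ^ 2 + Real.exp p.2 * (Y p / 2 - pdτ Y p - p.1 / 2 * pdv Y p) ^ 2)

/-- The inverse-profile translator equation
`Y_τ = Y_vv/(1+Y_v²) + Y_v/v + (Y − vY_v)/2 + e^τ M[Y]`. -/
def InvEq (Y : ℝ × ℝ → ℝ) (p : ℝ × ℝ) : Prop :=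
  pdτ Y p = pdv (pdv Y) p / (1 + (pdv Y p) ^ 2) + pdv Y p / p.1
    + (Y p - p.1 * pdv Y p) / 2 + Real.exp p.2 * Mop Y p

/-!
Differentiating `v (Y (u, τ), τ) = u` twice expresses the 2-jet of `v` at `(Y (u, τ), τ)` through
that of `Y` at `(u, τ)`. With these formulas each factor of the denominators in `N[v]` becomes the
corresponding factor in `M[Y]` divided by `Y_v²`, and `N[v] = -M[Y] / Y_v`. Since also
`v_τ = -Y_τ / Y_v`, the inverse-profile equation is `-Y_v` times the renormalized one.
-/

section TwiceDifferentiable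

open scoped Topology

variable {𝕜 E F : Type*} [NontriviallyNormedField 𝕜] [NormedAddCommGroup E] [NormedSpace 𝕜 E]
  [NormedAddCommGroup F] [NormedSpace 𝕜 F] {f : E → F} {p : E}

theorem eventually_differentiableAt (hf : ContDiffAt 𝕜 2 f p) :
    ∀ᶠ x in 𝓝 p, DifferentiableAt 𝕜 f x :=
  (hf.eventually (by simp)).mono fun _ hx => hx.differentiableAt two_ne_zero

theorem differentiableAt_fderiv (hf : ContDiffAt 𝕜 2 f p) : DifferentiableAt 𝕜 (fderiv 𝕜 f) p :=
  (hf.fderiv_right (m := 1) (by norm_num)).differentiableAt one_ne_zero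

end TwiceDifferentiable

section PartialDerivatives

open scoped Topology

variable {f g G Y : ℝ × ℝ → ℝ} {p : ℝ × ℝ}

theorem hasDerivAt_pdv (hf : DifferentiableAt ℝ f p) :
    HasDerivAt (fun s => f (s, p.2)) (pdv f p) p.1 :=
  (hf.comp (f := fun s => (s, p.2)) p.1
    (differentiableAt_id.prodMk (differentiableAt_const _))).hasDerivAt

theorem hasDerivAt_pdτ (hf : DifferentiableAt ℝ f p) :
    HasDerivAt (fun s => f (p.1, s)) (pdτ f p) p.2 :=
  (hf.comp (f := fun s => (p.1, s)) p.2
    ((differentiableAt_const _).prodMk differentiableAt_id)).hasDerivAt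

theorem fderiv_apply_one_zero (hf : DifferentiableAt ℝ f p) : fderiv ℝ f p (1, 0) = pdv f p :=
  (hf.hasFDerivAt.comp_hasDerivAt (f := fun s => (s, p.2)) p.1
    ((hasDerivAt_id p.1).prodMk (hasDerivAt_const p.1 p.2))).deriv.symm

theorem fderiv_apply_zero_one (hf : DifferentiableAt ℝ f p) : fderiv ℝ f p (0, 1) = pdτ f p :=
  (hf.hasFDerivAt.comp_hasDerivAt (f := fun s => (p.1, s)) p.2
    ((hasDerivAt_const p.2 p.1).prodMk (hasDerivAt_id p.2))).deriv.symm

theorem fderiv_apply_prodMk (hf : DifferentiableAt ℝ f p) (a b : ℝ) :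
    fderiv ℝ f p (a, b) = pdv f p * a + pdτ f p * b := by
  have hab : ((a, b) : ℝ × ℝ) = a • (1, 0) + b • (0, 1) := by simp
  rw [hab, map_add, map_smul, map_smul, fderiv_apply_one_zero hf, fderiv_apply_zero_one hf,
    smul_eq_mul, smul_eq_mul, mul_comm a, mul_comm b]

theorem pdv_congr (h : f =ᶠ[𝓝 p] g) : pdv f p = pdv g p :=
  Filter.EventuallyEq.deriv_eq (((Continuous.prodMk_left p.2).tendsto p.1).eventually h)

theorem pdτ_congr (h : f =ᶠ[𝓝 p] g) : pdτ f p = pdτ g p :=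
  Filter.EventuallyEq.deriv_eq (((Continuous.prodMk_right p.1).tendsto p.2).eventually h)

theorem hasDerivAt_comp_prodMk {a b : ℝ → ℝ} {a' b' t : ℝ}
    (hf : DifferentiableAt ℝ f (a t, b t)) (ha : HasDerivAt a a' t) (hb : HasDerivAt b b' t) :
    HasDerivAt (fun s => f (a s, b s)) (pdv f (a t, b t) * a' + pdτ f (a t, b t) * b') t :=
  fderiv_apply_prodMk hf a' b' ▸ hf.hasFDerivAt.comp_hasDerivAt t (ha.prodMk hb)

theorem pdv_comp (hG : DifferentiableAt ℝ G (Y p, p.2)) (hY : DifferentiableAt ℝ Y p) :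
    pdv (fun x => G (Y x, x.2)) p = pdv G (Y p, p.2) * pdv Y p :=
  (hasDerivAt_comp_prodMk hG (hasDerivAt_pdv hY) (hasDerivAt_const p.1 p.2)).deriv.trans
    (by rw [mul_zero, add_zero])

theorem pdτ_comp (hG : DifferentiableAt ℝ G (Y p, p.2)) (hY : DifferentiableAt ℝ Y p) :
    pdτ (fun x => G (Y x, x.2)) p = pdv G (Y p, p.2) * pdτ Y p + pdτ G (Y p, p.2) :=
  (hasDerivAt_comp_prodMk hG (hasDerivAt_pdτ hY) (hasDerivAt_id' p.2)).deriv.trans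
    (by rw [mul_one])

theorem pdv_eventuallyEq_fderiv (hf : ContDiffAt ℝ 2 f p) :
    pdv f =ᶠ[𝓝 p] fun x => fderiv ℝ f x (1, 0) :=
  (eventually_differentiableAt hf).mono fun _ hx => (fderiv_apply_one_zero hx).symm

theorem pdτ_eventuallyEq_fderiv (hf : ContDiffAt ℝ 2 f p) :
    pdτ f =ᶠ[𝓝 p] fun x => fderiv ℝ f x (0, 1) :=
  (eventually_differentiableAt hf).mono fun _ hx => (fderiv_apply_zero_one hx).symm

theorem differentiableAt_pdv (hf : ContDiffAt ℝ 2 f p) : DifferentiableAt ℝ (pdv f) p :=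
  ((differentiableAt_fderiv hf).clm_apply (differentiableAt_const _)).congr_of_eventuallyEq
    (pdv_eventuallyEq_fderiv hf)

theorem differentiableAt_pdτ (hf : ContDiffAt ℝ 2 f p) : DifferentiableAt ℝ (pdτ f) p :=
  ((differentiableAt_fderiv hf).clm_apply (differentiableAt_const _)).congr_of_eventuallyEq
    (pdτ_eventuallyEq_fderiv hf)

theorem pdv_pdτ_comm (hf : ContDiffAt ℝ 2 f p) : pdv (pdτ f) p = pdτ (pdv f) p := by
  rw [← fderiv_apply_one_zero (differentiableAt_pdτ hf),
    ← fderiv_apply_zero_one (differentiableAt_pdv hf),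
    (pdv_eventuallyEq_fderiv hf).fderiv_eq, (pdτ_eventuallyEq_fderiv hf).fderiv_eq,
    fderiv_clm_apply (differentiableAt_fderiv hf) (differentiableAt_const _),
    fderiv_clm_apply (differentiableAt_fderiv hf) (differentiableAt_const _)]
  simpa using (hf.isSymmSndFDerivAt (by simp)).eq (1, 0) (0, 1)

end PartialDerivatives

section RightInverse

open scoped Topology

variable {v Y : ℝ × ℝ → ℝ} {p : ℝ × ℝ}

/-- `Y` is a right inverse of `v` in the first variable near `p`: `v (Y (u, τ), τ) = u` for all
`(u, τ)` close to `p`. The equation is asked on a neighbourhood so that it can be differentiated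
at `p`. -/
def IsFstRightInverseAt (v Y : ℝ × ℝ → ℝ) (p : ℝ × ℝ) : Prop :=
  ∀ᶠ x in 𝓝 p, v (Y x, x.2) = x.1

namespace IsFstRightInverseAt

theorem pdv_mul_pdv (hinv : IsFstRightInverseAt v Y p)
    (hv : DifferentiableAt ℝ v (Y p, p.2)) (hY : DifferentiableAt ℝ Y p) :
    pdv v (Y p, p.2) * pdv Y p = 1 := by
  rw [← pdv_comp hv hY, pdv_congr hinv]
  exact deriv_id p.1

theorem pdv_ne_zero (hinv : IsFstRightInverseAt v Y p)
    (hv : DifferentiableAt ℝ v (Y p, p.2)) (hY : DifferentiableAt ℝ Y p) : pdv Y p ≠ 0 :=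
  right_ne_zero_of_mul_eq_one (hinv.pdv_mul_pdv hv hY)

theorem pdv_eq (hinv : IsFstRightInverseAt v Y p)
    (hv : DifferentiableAt ℝ v (Y p, p.2)) (hY : DifferentiableAt ℝ Y p) :
    pdv v (Y p, p.2) = (pdv Y p)⁻¹ :=
  eq_inv_of_mul_eq_one_left (hinv.pdv_mul_pdv hv hY)

theorem pdτ_eq (hinv : IsFstRightInverseAt v Y p)
    (hv : DifferentiableAt ℝ v (Y p, p.2)) (hY : DifferentiableAt ℝ Y p) :
    pdτ v (Y p, p.2) = -pdτ Y p / pdv Y p := by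
  have htotal : pdv v (Y p, p.2) * pdτ Y p + pdτ v (Y p, p.2) = 0 := by
    rw [← pdτ_comp hv hY, pdτ_congr hinv]
    exact deriv_const p.2 p.1
  rw [hinv.pdv_eq hv hY] at htotal
  linear_combination htotal

theorem eventually_differentiableAt_and (hinv : IsFstRightInverseAt v Y p)
    (hv : ContDiffAt ℝ 2 v (Y p, p.2)) (hY : ContDiffAt ℝ 2 Y p) :
    ∀ᶠ x in 𝓝 p, DifferentiableAt ℝ v (Y x, x.2) ∧ DifferentiableAt ℝ Y x ∧
      IsFstRightInverseAt v Y x :=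
  ((hY.continuousAt.prodMk continuousAt_snd).eventually (eventually_differentiableAt hv)).and
    ((eventually_differentiableAt hY).and hinv.eventually_nhds)

theorem pdv_comp_eventuallyEq (hinv : IsFstRightInverseAt v Y p)
    (hv : ContDiffAt ℝ 2 v (Y p, p.2)) (hY : ContDiffAt ℝ 2 Y p) :
    (fun x => pdv v (Y x, x.2)) =ᶠ[𝓝 p] fun x => (pdv Y x)⁻¹ :=
  (hinv.eventually_differentiableAt_and hv hY).mono fun _ ⟨hvx, hYx, hx⟩ => hx.pdv_eq hvx hYx

theorem pdτ_comp_eventuallyEq (hinv : IsFstRightInverseAt v Y p)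
    (hv : ContDiffAt ℝ 2 v (Y p, p.2)) (hY : ContDiffAt ℝ 2 Y p) :
    (fun x => pdτ v (Y x, x.2)) =ᶠ[𝓝 p] fun x => -pdτ Y x / pdv Y x :=
  (hinv.eventually_differentiableAt_and hv hY).mono fun _ ⟨hvx, hYx, hx⟩ => hx.pdτ_eq hvx hYx

theorem pdv_pdv_eq (hinv : IsFstRightInverseAt v Y p)
    (hv : ContDiffAt ℝ 2 v (Y p, p.2)) (hY : ContDiffAt ℝ 2 Y p) :
    pdv (pdv v) (Y p, p.2) = -pdv (pdv Y) p / pdv Y p ^ 3 := by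
  have hvd := hv.differentiableAt two_ne_zero
  have hYd := hY.differentiableAt two_ne_zero
  have hne := hinv.pdv_ne_zero hvd hYd
  have hchain : pdv (pdv v) (Y p, p.2) * pdv Y p = -pdv (pdv Y) p / pdv Y p ^ 2 := by
    rw [← pdv_comp (differentiableAt_pdv hv) hYd, pdv_congr (hinv.pdv_comp_eventuallyEq hv hY)]
    exact ((hasDerivAt_pdv (differentiableAt_pdv hY)).inv hne).deriv
  rw [eq_div_of_mul_eq hne hchain, div_div, ← pow_succ]

theorem pdτ_pdv_eq (hinv : IsFstRightInverseAt v Y p)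
    (hv : ContDiffAt ℝ 2 v (Y p, p.2)) (hY : ContDiffAt ℝ 2 Y p) :
    pdτ (pdv v) (Y p, p.2) =
      -pdτ (pdv Y) p / pdv Y p ^ 2 + pdv (pdv Y) p * pdτ Y p / pdv Y p ^ 3 := by
  have hvd := hv.differentiableAt two_ne_zero
  have hYd := hY.differentiableAt two_ne_zero
  have hne := hinv.pdv_ne_zero hvd hYd
  have hchain : pdv (pdv v) (Y p, p.2) * pdτ Y p + pdτ (pdv v) (Y p, p.2) =
      -pdτ (pdv Y) p / pdv Y p ^ 2 := by
    rw [← pdτ_comp (differentiableAt_pdv hv) hYd, pdτ_congr (hinv.pdv_comp_eventuallyEq hv hY)]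
    exact ((hasDerivAt_pdτ (differentiableAt_pdv hY)).inv hne).deriv
  rw [hinv.pdv_pdv_eq hv hY] at hchain
  linear_combination hchain

theorem pdτ_pdτ_eq (hinv : IsFstRightInverseAt v Y p)
    (hv : ContDiffAt ℝ 2 v (Y p, p.2)) (hY : ContDiffAt ℝ 2 Y p) :
    pdτ (pdτ v) (Y p, p.2) = -pdτ (pdτ Y) p / pdv Y p
      + 2 * pdτ Y p * pdτ (pdv Y) p / pdv Y p ^ 2
      - pdv (pdv Y) p * pdτ Y p ^ 2 / pdv Y p ^ 3 := by
  have hvd := hv.differentiableAt two_ne_zero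
  have hYd := hY.differentiableAt two_ne_zero
  have hne := hinv.pdv_ne_zero hvd hYd
  have hchain : pdv (pdτ v) (Y p, p.2) * pdτ Y p + pdτ (pdτ v) (Y p, p.2) =
      (-pdτ (pdτ Y) p * pdv Y p - -pdτ Y p * pdτ (pdv Y) p) / pdv Y p ^ 2 := by
    rw [← pdτ_comp (differentiableAt_pdτ hv) hYd, pdτ_congr (hinv.pdτ_comp_eventuallyEq hv hY)]
    exact ((hasDerivAt_pdτ (differentiableAt_pdτ hY)).neg.div
      (hasDerivAt_pdτ (differentiableAt_pdv hY)) hne).deriv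
  rw [pdv_pdτ_comm hv, hinv.pdτ_pdv_eq hv hY] at hchain
  field_simp at hchain ⊢
  linear_combination hchain

theorem one_add_sq_pdv_eq (hinv : IsFstRightInverseAt v Y p)
    (hv : DifferentiableAt ℝ v (Y p, p.2)) (hY : DifferentiableAt ℝ Y p) :
    1 + pdv v (Y p, p.2) ^ 2 = (1 + pdv Y p ^ 2) / pdv Y p ^ 2 := by
  have hne := hinv.pdv_ne_zero hv hY
  rw [hinv.pdv_eq hv hY]
  field_simp
  ring

theorem Nop_denominator_eq (hinv : IsFstRightInverseAt v Y p)
    (hv : DifferentiableAt ℝ v (Y p, p.2)) (hY : DifferentiableAt ℝ Y p) (c : ℝ) :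
    1 + pdv v (Y p, p.2) ^ 2
        + c * (pdτ v (Y p, p.2) + Y p / 2 * pdv v (Y p, p.2) - v (Y p, p.2) / 2) ^ 2 =
      (1 + pdv Y p ^ 2 + c * (Y p / 2 - pdτ Y p - p.1 / 2 * pdv Y p) ^ 2) / pdv Y p ^ 2 := by
  have hne := hinv.pdv_ne_zero hv hY
  rw [hinv.one_add_sq_pdv_eq hv hY, hinv.pdv_eq hv hY, hinv.pdτ_eq hv hY,
    hinv.self_of_nhds]
  field_simp
  ring

theorem Nop_eq (hinv : IsFstRightInverseAt v Y p)
    (hv : ContDiffAt ℝ 2 v (Y p, p.2)) (hY : ContDiffAt ℝ 2 Y p) :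
    Nop v (Y p, p.2) = -Mop Y p / pdv Y p := by
  have hvd := hv.differentiableAt two_ne_zero
  have hYd := hY.differentiableAt two_ne_zero
  have hne := hinv.pdv_ne_zero hvd hYd
  have hgrad : 1 + pdv Y p ^ 2 ≠ 0 := by positivity
  unfold Nop Mop
  dsimp only
  rw [hinv.Nop_denominator_eq hvd hYd, hinv.one_add_sq_pdv_eq hvd hYd, hinv.pdv_eq hvd hYd,
    hinv.pdτ_eq hvd hYd, hinv.pdv_pdv_eq hv hY, hinv.pdτ_pdv_eq hv hY, hinv.pdτ_pdτ_eq hv hY,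
    hinv.self_of_nhds]
  -- The common denominator must stay atomic: its expansion is never needed to compare numerators.
  obtain ⟨D, hD⟩ : ∃ D, D = 1 + pdv Y p ^ 2
    + Real.exp p.2 * (Y p / 2 - pdτ Y p - p.1 / 2 * pdv Y p) ^ 2 := ⟨_, rfl⟩
  have hD_ne : D ≠ 0 := by rw [hD]; positivity
  rw [← hD]
  field_simp
  ring

end IsFstRightInverseAt

theorem stmt_9_general (hp : p.1 ≠ 0) (hinv : IsFstRightInverseAt v Y p)
    (hv : ContDiffAt ℝ 2 v (Y p, p.2)) (hY : ContDiffAt ℝ 2 Y p)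
    (heq : RenormEq v (Y p, p.2)) : InvEq Y p := by
  have hvd := hv.differentiableAt two_ne_zero
  have hYd := hY.differentiableAt two_ne_zero
  have hne := hinv.pdv_ne_zero hvd hYd
  have hgrad : 1 + pdv Y p ^ 2 ≠ 0 := by positivity
  unfold RenormEq at heq
  rw [hinv.one_add_sq_pdv_eq hvd hYd, hinv.Nop_eq hv hY, hinv.pdv_eq hvd hYd,
    hinv.pdτ_eq hvd hYd, hinv.pdv_pdv_eq hv hY, hinv.self_of_nhds] at heq
  calc pdτ Y p = -pdv Y p * (-pdτ Y p / pdv Y p) := by field_simp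
    _ = pdv (pdv Y) p / (1 + pdv Y p ^ 2) + pdv Y p / p.1
        + (Y p - p.1 * pdv Y p) / 2 + Real.exp p.2 * Mop Y p := by
      rw [heq]
      field_simp
      ring

end RightInverse

/-- If `v` satisfies the renormalized translator equation and `Y` is a two-sided inverse of `v`
in the first variable, then `Y` satisfies the inverse-profile translator equation. -/
theorem stmt_9 (Ω' U : Set (ℝ × ℝ)) (hΩ'open : IsOpen Ω') (hUopen : IsOpen U)
    (hUsub : ∀ p ∈ U, (0 : ℝ) < p.1)
    (v Y : ℝ × ℝ → ℝ)
    (hvC2 : ∀ p ∈ Ω', ContDiffAt ℝ 2 v p) (hvpos : ∀ p ∈ Ω', 0 < v p)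
    (hvEq : ∀ p ∈ Ω', RenormEq v p)
    (hYC2 : ∀ p ∈ U, ContDiffAt ℝ 2 Y p)
    (hinv₁ : ∀ p ∈ Ω', (v p, p.2) ∈ U ∧ Y (v p, p.2) = p.1)
    (hinv₂ : ∀ p ∈ U, (Y p, p.2) ∈ Ω' ∧ v (Y p, p.2) = p.1) :
    ∀ p ∈ U, InvEq Y p := by
  intro p hp
  have hinv : IsFstRightInverseAt v Y p :=
    (hUopen.eventually_mem hp).mono fun x hx => (hinv₂ x hx).2
  have hq : (Y p, p.2) ∈ Ω' := (hinv₂ p hp).1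
  exact stmt_9_general (hUsub p hp).ne' hinv (hvC2 _ hq) (hYC2 p hp) (hvEq _ hq)

end
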